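/- Let b > 0, let q : ℝ → ℂ be continuous on [−b,b], let f solve f'' − q f = 0 on [−b,b] with f(0) = 1, f'(0) = 0, and assume f(x) ≠ 0 on [−b,b]. For ω ∈ ℂ let u(ω,·) be the solution of y'' − q(x)y = −ω² y on [−b,b] with y(0) = 1, y'(0) = iω. Then for every ω ∈ ℂ and every x ∈ (0,b], u(ω,x) = e^{iωx} + Σ_{n=0}^{∞} β_n(x) ∫_{−1}^{1} P_n(y) e^{iωxy} dy, where β_n(x) = ((2n+1)/2)·(Σ_{k=0}^{n} l_{k,n} φ_k(x)/x^k − 1), and for each fixed ω the series converges uniformly with respect to x on compact subsets of (0,b]. -/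

import Mathlib

open MeasureTheory Set Filter Finset Complex Topology

noncomputable section

/-- The iterated integrals X⁽ⁿ⁾: X⁽⁰⁾ ≡ 1, X⁽ⁿ⁾(x) = n ∫₀ˣ X⁽ⁿ⁻¹⁾(s) (f(s)²)^((−1)ⁿ) ds. -/
def formalX (f : ℝ → ℂ) : ℕ → ℝ → ℂ
  | 0 => fun _ => 1
  | n + 1 => fun x =>
      (n + 1 : ℂ) * ∫ s in (0:ℝ)..x, formalX f n s * ((f s) ^ 2) ^ ((-1 : ℤ) ^ (n + 1))

/-- The iterated integrals X̃⁽ⁿ⁾: X̃⁽⁰⁾ ≡ 1, X̃⁽ⁿ⁾(x) = n ∫₀ˣ X̃⁽ⁿ⁻¹⁾(s) (f(s)²)^((−1)^(n−1)) ds. -/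
def formalXt (f : ℝ → ℂ) : ℕ → ℝ → ℂ
  | 0 => fun _ => 1
  | n + 1 => fun x =>
      (n + 1 : ℂ) * ∫ s in (0:ℝ)..x, formalXt f n s * ((f s) ^ 2) ^ ((-1 : ℤ) ^ n)

/-- The formal powers φₖ: φₖ = f·X⁽ᵏ⁾ for odd k, φₖ = f·X̃⁽ᵏ⁾ for even k. -/
def formalPower (f : ℝ → ℂ) (k : ℕ) (x : ℝ) : ℂ :=
  if Odd k then f x * formalX f k x else f x * formalXt f k x

/-- The Legendre polynomial Pₙ via Rodrigues' formula. -/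
def legendreP (n : ℕ) : Polynomial ℝ :=
  ((1 : ℝ) / (2 ^ n * n.factorial)) • Polynomial.derivative^[n] ((Polynomial.X ^ 2 - 1) ^ n)

/-- βₙ(x) = ((2n+1)/2)·(Σₖ l_{k,n} φₖ(x)/xᵏ − 1), where l_{k,n} is the coefficient of xᵏ in Pₙ. -/
def betaCoef (f : ℝ → ℂ) (n : ℕ) (x : ℝ) : ℂ :=
  ((2 * n + 1 : ℂ) / 2) *
    ((∑ k ∈ Finset.range (n + 1), ((legendreP n).coeff k : ℂ) * formalPower f k x / (x : ℂ) ^ k) - 1)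

/-- Integral of a polynomial over `[-1,1]`. -/
def polyInt (p : Polynomial ℝ) : ℝ := ∫ t in (-1:ℝ)..1, p.eval t

lemma polyInt_intble (p : Polynomial ℝ) (a b : ℝ) :
    IntervalIntegrable (fun t => p.eval t) volume a b :=
  (p.continuous).intervalIntegrable a b

lemma polyInt_add (p q : Polynomial ℝ) : polyInt (p + q) = polyInt p + polyInt q := by
  unfold polyInt
  rw [← intervalIntegral.integral_add (polyInt_intble p _ _) (polyInt_intble q _ _)]
  simp

lemma polyInt_sub (p q : Polynomial ℝ) : polyInt (p - q) = polyInt p - polyInt q := by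
  unfold polyInt
  rw [← intervalIntegral.integral_sub (polyInt_intble p _ _) (polyInt_intble q _ _)]
  simp

lemma polyInt_smul (c : ℝ) (p : Polynomial ℝ) : polyInt (c • p) = c * polyInt p := by
  unfold polyInt
  rw [← intervalIntegral.integral_const_mul]
  simp

lemma polyInt_derivative (p : Polynomial ℝ) :
    polyInt (Polynomial.derivative p) = p.eval 1 - p.eval (-1) := by
  unfold polyInt
  exact intervalIntegral.integral_eq_sub_of_hasDerivAt (fun x _ => p.hasDerivAt x)
    (polyInt_intble _ _ _)

lemma legendre_bdry (n j : ℕ) (hj : j < n) (a : ℝ) (ha : a ^ 2 = 1) :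
    (Polynomial.derivative^[j] ((Polynomial.X ^ 2 - 1 : Polynomial ℝ) ^ n)).eval a = 0 := by
  obtain ⟨r, hr⟩ := Polynomial.pow_sub_dvd_iterate_derivative_pow
    (Polynomial.X ^ 2 - 1 : Polynomial ℝ) n j
  rw [hr]
  have : n - j ≠ 0 := by omega
  simp [ha, this]

lemma legendre_orth_aux (n j : ℕ) (hj : j ≤ n) (p : Polynomial ℝ) (hp : p.degree < j) :
    polyInt (p * Polynomial.derivative^[j] ((Polynomial.X ^ 2 - 1 : Polynomial ℝ) ^ n)) = 0 := by
  induction j generalizing p with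
  | zero =>
    have : p = 0 := by
      simpa using hp
    simp [this, polyInt]
  | succ j ih =>
    have h1 : (Polynomial.derivative p).degree < j := by
      by_cases h0 : p = 0
      · simp [h0]
      · have := Polynomial.degree_derivative_lt h0
        have h2 : p.degree ≤ j := by
          have := Polynomial.degree_eq_natDegree h0
          rw [this] at hp ⊢
          norm_cast at hp ⊢
          omega
        exact lt_of_lt_of_le this h2
    have h2 := ih (by omega) _ h1
    have h3 := polyInt_derivative
      (p * Polynomial.derivative^[j] ((Polynomial.X ^ 2 - 1 : Polynomial ℝ) ^ n))
    rw [Polynomial.derivative_mul, polyInt_add, h2, Polynomial.eval_mul, Polynomial.eval_mul,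
      legendre_bdry n j (by omega) 1 (by norm_num),
      legendre_bdry n j (by omega) (-1) (by norm_num)] at h3
    rw [Function.iterate_succ_apply']
    linarith

lemma legendre_orth (n : ℕ) (p : Polynomial ℝ) (hp : p.degree < n) :
    polyInt (p * legendreP n) = 0 := by
  unfold legendreP
  rw [mul_smul_comm, polyInt_smul, legendre_orth_aux n n le_rfl p hp, mul_zero]

lemma legendre_coeff (n k : ℕ) : (legendreP n).coeff k =
    (1 / 2 ^ n) * ((k + n).choose n : ℝ) *
      ((Polynomial.X ^ 2 - 1 : Polynomial ℝ) ^ n).coeff (k + n) := by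
  unfold legendreP
  rw [Polynomial.coeff_smul, Polynomial.coeff_iterate_derivative, Nat.descFactorial_eq_factorial_mul_choose]
  have : (n.factorial : ℝ) ≠ 0 := by positivity
  simp only [smul_eq_mul, nsmul_eq_mul, Nat.cast_mul]
  field_simp

lemma base_coeff (n m : ℕ) : |((Polynomial.X ^ 2 - 1 : Polynomial ℝ) ^ n).coeff m| ≤ 2 ^ n := by
  induction n generalizing m with
  | zero => 
    simp only [pow_zero, Polynomial.coeff_one]
    split_ifs <;> simp
  | succ n ih =>
    rw [pow_succ, mul_sub, mul_one, Polynomial.coeff_sub, Polynomial.coeff_mul_X_pow']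
    have h1 := ih m
    have h2 := ih (m - 2)
    have h3 : (0:ℝ) < 2 ^ n := by positivity
    have h4 : (2:ℝ) ^ (n + 1) = 2 ^ n + 2 ^ n := by ring
    rw [h4]
    split_ifs
    · refine (abs_sub _ _).trans ?_
      linarith
    · simp only [zero_sub, abs_neg]; linarith

lemma legendre_natDegree_le (n : ℕ) : (legendreP n).natDegree ≤ n := by
  rw [Polynomial.natDegree_le_iff_coeff_eq_zero]
  intro k hk
  rw [legendre_coeff, Polynomial.coeff_eq_zero_of_natDegree_lt, mul_zero]
  have : ((Polynomial.X ^ 2 - 1 : Polynomial ℝ) ^ n).natDegree ≤ n * 2 := by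
    refine Polynomial.natDegree_pow_le_of_le n ?_
    compute_degree
  omega

lemma legendre_coeff_self_ne (n : ℕ) : (legendreP n).coeff n ≠ 0 := by
  rw [legendre_coeff]
  have h : ((Polynomial.X ^ 2 - 1 : Polynomial ℝ) ^ n).coeff (n + n) = 1 := by
    have hm : (Polynomial.X ^ 2 - 1 : Polynomial ℝ).Monic := by monicity!
    have hd : (Polynomial.X ^ 2 - 1 : Polynomial ℝ).natDegree = 2 := by compute_degree!
    have := (hm.pow n).coeff_natDegree
    rw [hm.natDegree_pow, hd] at this
    rw [← mul_two]; exact this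
  rw [h]
  have : 0 < (n + n).choose n := Nat.choose_pos (by omega)
  positivity

lemma legendre_coeff_le (n k : ℕ) (hk : k ≤ n) : |(legendreP n).coeff k| ≤ 4 ^ n := by
  rw [legendre_coeff, abs_mul, abs_of_nonneg (by positivity)]
  have h1 := base_coeff n (k + n)
  have h2 : ((k + n).choose n : ℝ) ≤ 4 ^ n := by
    have : (k+n).choose n ≤ 2 ^ (k + n) := Nat.choose_le_two_pow _ _
    have h' : 2 ^ (k + n) ≤ 2 ^ (2 * n) := Nat.pow_le_pow_right (by norm_num) (by omega)
    rw [pow_mul] at h'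
    exact_mod_cast this.trans (by simpa using h')
  calc _ ≤ (1 / 2 ^ n) * (4 ^ n : ℝ) * 2 ^ n := by gcongr
    _ = 4 ^ n := by field_simp

lemma legendre_eval (n : ℕ) (a : ℝ) (ha : a ^ 2 = 1) : (legendreP n).eval a = a ^ n := by
  unfold legendreP
  have h1 : (Polynomial.derivative^[n] ((Polynomial.X ^ 2 - 1 : Polynomial ℝ) ^ n)).eval a
      = n.factorial * (2 * a) ^ n := by
    rw [← Polynomial.factorial_smul_hasseDeriv]
    rw [LinearMap.smul_apply, Polynomial.eval_smul, ← Polynomial.taylor_coeff]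
    have : Polynomial.taylor a ((Polynomial.X ^ 2 - 1 : Polynomial ℝ) ^ n)
       = (Polynomial.X + Polynomial.C (2 * a)) ^ n * Polynomial.X ^ n := by
      rw [Polynomial.taylor_pow, ← mul_pow]
      congr 1
      simp only [map_sub, Polynomial.taylor_pow, Polynomial.taylor_X, Polynomial.taylor_one]
      have h2 : (Polynomial.C a) ^ 2 = (1 : Polynomial ℝ) := by
        rw [← Polynomial.C_pow, ha, Polynomial.C_1]
      simp only [map_mul, Polynomial.C_1]
      have h3 : (Polynomial.C (2:ℝ)) = 2 := rfl
      rw [h3]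
      linear_combination h2
    rw [this, Polynomial.coeff_mul_X_pow', if_pos le_rfl, Nat.sub_self,
      Polynomial.coeff_zero_eq_eval_zero]
    simp
  rw [Polynomial.eval_smul, h1]
  have : (n.factorial : ℝ) ≠ 0 := by positivity
  simp only [smul_eq_mul, mul_pow]
  field_simp

lemma lt_degree_of {p : Polynomial ℝ} {n : ℕ} (h : p.natDegree ≤ n) (h0 : p.coeff n = 0) :
    p.degree < n := by
  rw [Polynomial.degree_lt_iff_coeff_zero]
  intro m hm
  rcases hm.eq_or_lt with rfl | hm
  · exact h0
  · exact Polynomial.coeff_eq_zero_of_natDegree_lt (by omega)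

lemma legendre_norm (n : ℕ) : polyInt (legendreP n * legendreP n) = 2 / (2 * n + 1) := by
  set P := legendreP n with hP
  have hd : P.natDegree ≤ n := legendre_natDegree_le n
  have h1 := polyInt_derivative (Polynomial.X * (P * P))
  have h2 : (Polynomial.X * Polynomial.derivative P - (n : ℝ) • P).degree < (n : WithBot ℕ) := by
    rw [Polynomial.degree_lt_iff_coeff_zero]
    intro m hm
    rcases m with _ | m
    · have : n = 0 := by omega
      simp [this]
    · rw [Polynomial.coeff_sub, Polynomial.coeff_X_mul, Polynomial.coeff_derivative,
        Polynomial.coeff_smul]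
      rcases hm.eq_or_lt with h | h
      · rw [h]; push_cast; simp; ring
      · rw [Polynomial.coeff_eq_zero_of_natDegree_lt (p := P) (by omega)]; simp
  have h3 := legendre_orth n _ h2
  rw [← hP, sub_mul, polyInt_sub, smul_mul_assoc, polyInt_smul] at h3
  have h4 : Polynomial.derivative (Polynomial.X * (P * P)) =
     P * P + (2:ℝ) • (Polynomial.X * Polynomial.derivative P * P) := by
    simp only [Polynomial.derivative_mul, Polynomial.derivative_X, Polynomial.smul_eq_C_mul]
    have h3 : (Polynomial.C (2:ℝ)) = 2 := rfl
    rw [h3]; ring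
  rw [h4, polyInt_add, polyInt_smul] at h1
  simp only [Polynomial.eval_mul, Polynomial.eval_X, hP,
    legendre_eval n 1 (by norm_num), legendre_eval n (-1) (by norm_num)] at h1
  have h5 : (-1 : ℝ) ^ n * (-1) ^ n = 1 := by rw [← mul_pow]; norm_num
  rw [← hP, h5, one_pow] at h1
  have : (2 * (n:ℝ) + 1) ≠ 0 := by positivity
  field_simp
  linarith

lemma legendre_expand (k : ℕ) (p : Polynomial ℝ) (hp : p.degree < k) :
    p = ∑ n ∈ Finset.range k,
      (((2 * n + 1 : ℝ) / 2) * polyInt (p * legendreP n)) • legendreP n := by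
  induction k generalizing p with
  | zero =>
    simpa using hp
  | succ k ih =>
    set c := p.coeff k / (legendreP k).coeff k with hc
    set r := p - c • legendreP k with hr
    have hpk : p.natDegree ≤ k := by
      rw [Polynomial.natDegree_le_iff_coeff_eq_zero]
      rw [Polynomial.degree_lt_iff_coeff_zero] at hp
      intro N hN; exact hp N hN
    have hrd : r.degree < k := by
      apply lt_degree_of
      · refine (Polynomial.natDegree_sub_le _ _).trans (max_le hpk ?_)
        exact (Polynomial.natDegree_smul_le _ _).trans (legendre_natDegree_le k)
      · rw [hr, Polynomial.coeff_sub, Polynomial.coeff_smul, hc, smul_eq_mul,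
          div_mul_cancel₀ _ (legendre_coeff_self_ne k), sub_self]
    have hpr : p = r + c • legendreP k := by rw [hr]; ring
    have h1 : ∀ n ∈ Finset.range k, polyInt (p * legendreP n) = polyInt (r * legendreP n) := by
      intro n hn
      rw [hpr, add_mul, polyInt_add, smul_mul_assoc, polyInt_smul, mul_comm (legendreP k),
        legendre_orth k (legendreP n), mul_zero, add_zero]
      refine lt_of_le_of_lt Polynomial.degree_le_natDegree ?_
      have := legendre_natDegree_le n
      have := Finset.mem_range.mp hn
      norm_cast
      omega
    have h2 : polyInt (p * legendreP k) = c * (2 / (2 * k + 1)) := by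
      rw [hpr, add_mul, polyInt_add, smul_mul_assoc, polyInt_smul, legendre_orth k r hrd,
        legendre_norm, zero_add]
    rw [Finset.sum_range_succ, h2]
    have h3 : ((2 * k + 1 : ℝ) / 2) * (c * (2 / (2 * k + 1))) = c := by
      have : (2 * (k:ℝ) + 1) ≠ 0 := by positivity
      field_simp
    rw [h3, Finset.sum_congr rfl (fun n hn => by rw [h1 n hn]), ← ih r hrd, ← hpr]

lemma legendre_eval_le (n : ℕ) (t : ℝ) (ht : |t| ≤ 1) : |(legendreP n).eval t| ≤ 8 ^ n := by
  rw [Polynomial.eval_eq_sum_range' (Nat.lt_succ_of_le (legendre_natDegree_le n))]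
  refine (Finset.abs_sum_le_sum_abs _ _).trans ?_
  calc _ ≤ ∑ i ∈ Finset.range (n+1), (4:ℝ) ^ n := by
        refine Finset.sum_le_sum fun i hi => ?_
        rw [abs_mul, abs_pow]
        have := legendre_coeff_le n i (by have := Finset.mem_range.mp hi; omega)
        calc _ ≤ (4:ℝ) ^ n * 1 := by gcongr; exact pow_le_one₀ (abs_nonneg t) ht
          _ = _ := mul_one _
    _ = (n + 1) * 4 ^ n := by simp
    _ ≤ 2 ^ n * 4 ^ n := by
        gcongr
        exact_mod_cast Nat.lt_two_pow_self
    _ = 8 ^ n := by rw [← mul_pow]; norm_num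

lemma step_bound {x c : ℝ} {N : ℕ} (hx : 0 ≤ x) (F : ℝ → ℂ)
    (hF : ∀ s ∈ Set.Ioc (0:ℝ) x, ‖F s‖ ≤ c * s ^ N) :
    ‖∫ s in (0:ℝ)..x, F s‖ ≤ c * (x ^ (N + 1) / (N + 1)) := by
  have h := intervalIntegral.norm_integral_le_of_norm_le (μ := volume) (f := F)
    (g := fun s => c * s ^ N) hx (Filter.Eventually.of_forall hF)
    ((by fun_prop : Continuous fun s : ℝ => c * s ^ N).intervalIntegrable _ _)
  rwa [intervalIntegral.integral_const_mul, integral_pow, zero_pow (by omega), sub_zero] at h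

lemma ii_of_cont {b x : ℝ} (hx : x ∈ Set.Icc 0 b) {F : ℝ → ℂ}
    (hF : ContinuousOn F (Set.Icc 0 b)) : IntervalIntegrable F volume 0 x := by
  apply ContinuousOn.intervalIntegrable
  rw [Set.uIcc_of_le hx.1]
  exact hF.mono (Set.Icc_subset_Icc le_rfl hx.2)

lemma prim_cont {b : ℝ} (hb : 0 ≤ b) {F : ℝ → ℂ}
    (hF : ContinuousOn F (Set.Icc 0 b)) :
    ContinuousOn (fun x => ∫ s in (0:ℝ)..x, F s) (Set.Icc 0 b) := by
  have h := intervalIntegral.continuousOn_primitive_interval' (a := 0) (μ := volume)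
    (ii_of_cont ⟨hb, le_rfl⟩ hF) Set.left_mem_uIcc
  rwa [Set.uIcc_of_le hb] at h

section spps
variable {A B : ℕ → ℝ → ℂ} {a c : ℝ → ℂ} {b M : ℝ}

lemma spps_cont (hb : 0 ≤ b) (ha : ContinuousOn a (Set.Icc 0 b)) (hc : ContinuousOn c (Set.Icc 0 b))
    (hA0 : ∀ x, A 0 x = 1) (hB0 : ∀ x, B 0 x = 1)
    (hA : ∀ k x, A (k + 1) x = (k + 1 : ℂ) * ∫ s in (0:ℝ)..x, B k s * a s)
    (hB : ∀ k x, B (k + 1) x = (k + 1 : ℂ) * ∫ s in (0:ℝ)..x, A k s * c s) (k : ℕ) :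
    ContinuousOn (A k) (Set.Icc 0 b) ∧ ContinuousOn (B k) (Set.Icc 0 b) := by
  induction k with
  | zero =>
    rw [funext hA0, funext hB0]
    exact ⟨continuousOn_const, continuousOn_const⟩
  | succ k ih =>
    rw [funext (hA k), funext (hB k)]
    exact ⟨continuousOn_const.mul (prim_cont hb (ih.2.mul ha)),
      continuousOn_const.mul (prim_cont hb (ih.1.mul hc))⟩

lemma spps_bound (hM : 0 ≤ M) (haM : ∀ s ∈ Set.Icc 0 b, ‖a s‖ ≤ M)
    (hcM : ∀ s ∈ Set.Icc 0 b, ‖c s‖ ≤ M)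
    (hA0 : ∀ x, A 0 x = 1) (hB0 : ∀ x, B 0 x = 1)
    (hA : ∀ k x, A (k + 1) x = (k + 1 : ℂ) * ∫ s in (0:ℝ)..x, B k s * a s)
    (hB : ∀ k x, B (k + 1) x = (k + 1 : ℂ) * ∫ s in (0:ℝ)..x, A k s * c s) (k : ℕ) :
    ∀ x ∈ Set.Icc 0 b, ‖A k x‖ ≤ (M * x) ^ k ∧ ‖B k x‖ ≤ (M * x) ^ k := by
  have key : ∀ (k : ℕ) (C : ℝ → ℂ) (d : ℝ → ℂ) (_ : ∀ s ∈ Set.Icc 0 b, ‖d s‖ ≤ M)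
      (_ : ∀ x ∈ Set.Icc 0 b, ‖C x‖ ≤ (M * x) ^ k) (x : ℝ) (_ : x ∈ Set.Icc 0 b),
      ‖(k + 1 : ℂ) * ∫ s in (0:ℝ)..x, C s * d s‖ ≤ (M * x) ^ (k + 1) := by
    intro k C d hd hC x hx
    have h := step_bound (c := M ^ (k + 1)) (N := k) hx.1 (fun s => C s * d s) (by
      intro s hs
      have hs' : s ∈ Set.Icc 0 b := ⟨hs.1.le, hs.2.trans hx.2⟩
      rw [norm_mul]
      calc _ ≤ (M * s) ^ k * M := by
            have := hC s hs'
            have := hd s hs'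
            have := hs'.1
            gcongr
        _ = _ := by rw [mul_pow]; ring)
    have hk : ‖(k + 1 : ℂ)‖ = k + 1 := by
      have : (k + 1 : ℂ) = ((k + 1 : ℕ) : ℂ) := by push_cast; rfl
      rw [this, Complex.norm_natCast]; push_cast; rfl
    rw [norm_mul, hk]
    calc _ ≤ (k + 1 : ℝ) * (M ^ (k + 1) * (x ^ (k + 1) / (k + 1))) := by gcongr
      _ = _ := by rw [mul_pow]; field_simp
  induction k with
  | zero => intro x _; rw [hA0, hB0]; simp
  | succ k ih =>
    intro x hx
    rw [hA, hB]
    exact ⟨key k _ _ haM (fun x hx => (ih x hx).2) x hx,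
      key k _ _ hcM (fun x hx => (ih x hx).1) x hx⟩

lemma spps_rem_step {D : ℝ} {z : ℂ} {N : ℕ} {A' B' : ℕ → ℝ → ℂ} {d g h : ℝ → ℂ}
    (hM : 0 ≤ M) (hD : 0 ≤ D)
    (hd : ContinuousOn d (Set.Icc 0 b)) (hdM : ∀ s ∈ Set.Icc 0 b, ‖d s‖ ≤ M)
    (hA0 : ∀ x, A' 0 x = 1)
    (hA : ∀ k x, A' (k + 1) x = (k + 1 : ℂ) * ∫ s in (0:ℝ)..x, B' k s * d s)
    (hB : ∀ k, ContinuousOn (B' k) (Set.Icc 0 b)) (hh : ContinuousOn h (Set.Icc 0 b))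
    (hg : ∀ x ∈ Set.Icc 0 b, g x = 1 + ∫ s in (0:ℝ)..x, z * (h s * d s))
    (ih : ∀ x ∈ Set.Icc 0 b, ‖h x - ∑ k ∈ Finset.range N, z ^ k / (k.factorial : ℂ) * B' k x‖
      ≤ D * ((‖z‖ * M * x) ^ N / N.factorial)) (x : ℝ) (hx : x ∈ Set.Icc 0 b) :
    ‖g x - ∑ k ∈ Finset.range (N + 1), z ^ k / (k.factorial : ℂ) * A' k x‖
      ≤ D * ((‖z‖ * M * x) ^ (N + 1) / (N + 1).factorial) := by
  have e : g x - ∑ k ∈ Finset.range (N + 1), z ^ k / (k.factorial : ℂ) * A' k x =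
      ∫ s in (0:ℝ)..x,
        z * ((h s - ∑ k ∈ Finset.range N, z ^ k / (k.factorial : ℂ) * B' k s) * d s) := by
    have e1 : ∀ s, z * ((h s - ∑ k ∈ Finset.range N, z ^ k / (k.factorial : ℂ) * B' k s) * d s)
      = z * (h s * d s) - ∑ k ∈ Finset.range N, (z ^ (k + 1) / (k.factorial : ℂ)) * (B' k s * d s) := by
      intro s
      rw [sub_mul, mul_sub, Finset.sum_mul, Finset.mul_sum]
      congr 1
      refine Finset.sum_congr rfl fun k _ => ?_
      ring
    simp_rw [e1]
    have hint : ∀ k ∈ Finset.range N, IntervalIntegrable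
        (fun s => (z ^ (k + 1) / (k.factorial : ℂ)) * (B' k s * d s)) volume 0 x := fun k _ =>
      ii_of_cont hx (continuousOn_const.mul ((hB k).mul hd))
    have hi1 : IntervalIntegrable (fun s => z * (h s * d s)) volume 0 x :=
      ii_of_cont hx (continuousOn_const.mul (hh.mul hd))
    have hi2 : IntervalIntegrable (fun s => ∑ k ∈ Finset.range N,
        (z ^ (k + 1) / (k.factorial : ℂ)) * (B' k s * d s)) volume 0 x :=
      ii_of_cont hx (continuousOn_finsetSum _ fun k _ =>
        continuousOn_const.mul ((hB k).mul hd))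
    rw [intervalIntegral.integral_sub hi1 hi2, intervalIntegral.integral_finsetSum hint, hg x hx,
        Finset.sum_range_succ']
    simp only [hA0, pow_zero, Nat.factorial_zero, Nat.cast_one, div_one, mul_one]
    have e2 : ∀ k ∈ Finset.range N, z ^ (k + 1) / ((k + 1).factorial : ℂ) * A' (k + 1) x =
       ∫ s in (0:ℝ)..x, (z ^ (k + 1) / (k.factorial : ℂ)) * (B' k s * d s) := by
      intro k _
      rw [intervalIntegral.integral_const_mul, hA, Nat.factorial_succ]
      have h1 : (k.factorial : ℂ) ≠ 0 := by exact_mod_cast Nat.factorial_ne_zero k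
      have h2 : (k + 1 : ℂ) ≠ 0 := by exact_mod_cast Nat.succ_ne_zero k
      push_cast
      field_simp
    rw [Finset.sum_congr rfl e2]
    ring
  rw [e]
  have hb := step_bound (c := D * (‖z‖ * M) ^ (N + 1) / N.factorial) (N := N) hx.1
    (fun s => z * ((h s - ∑ k ∈ Finset.range N, z ^ k / (k.factorial : ℂ) * B' k s) * d s)) (by
      intro s hs
      have hs' : s ∈ Set.Icc 0 b := ⟨hs.1.le, hs.2.trans hx.2⟩
      have hs0 := hs'.1
      rw [norm_mul, norm_mul]
      calc _ ≤ ‖z‖ * ((D * ((‖z‖ * M * s) ^ N / N.factorial)) * M) := by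
            refine mul_le_mul_of_nonneg_left ?_ (norm_nonneg _)
            exact mul_le_mul (ih s hs') (hdM s hs') (norm_nonneg _) (by positivity)
        _ = _ := by rw [mul_pow _ s]; ring)
  refine hb.trans (le_of_eq ?_)
  rw [Nat.factorial_succ, mul_pow _ x]
  push_cast
  field_simp

lemma spps_rem {z : ℂ} {g h : ℝ → ℂ} {D : ℝ} (hb : 0 ≤ b) (hM : 0 ≤ M) (hD : 0 ≤ D)
    (ha : ContinuousOn a (Set.Icc 0 b)) (hc : ContinuousOn c (Set.Icc 0 b))
    (haM : ∀ s ∈ Set.Icc 0 b, ‖a s‖ ≤ M)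
    (hcM : ∀ s ∈ Set.Icc 0 b, ‖c s‖ ≤ M)
    (hA0 : ∀ x, A 0 x = 1) (hB0 : ∀ x, B 0 x = 1)
    (hA : ∀ k x, A (k + 1) x = (k + 1 : ℂ) * ∫ s in (0:ℝ)..x, B k s * a s)
    (hB : ∀ k x, B (k + 1) x = (k + 1 : ℂ) * ∫ s in (0:ℝ)..x, A k s * c s)
    (hg : ∀ x ∈ Set.Icc 0 b, g x = 1 + ∫ s in (0:ℝ)..x, z * (h s * a s))
    (hh : ∀ x ∈ Set.Icc 0 b, h x = 1 + ∫ s in (0:ℝ)..x, z * (g s * c s))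
    (hgc : ContinuousOn g (Set.Icc 0 b)) (hhc : ContinuousOn h (Set.Icc 0 b))
    (hgD : ∀ s ∈ Set.Icc 0 b, ‖g s‖ ≤ D) (hhD : ∀ s ∈ Set.Icc 0 b, ‖h s‖ ≤ D) (N : ℕ) :
    (∀ x ∈ Set.Icc 0 b, ‖g x - ∑ k ∈ Finset.range N, z ^ k / (k.factorial : ℂ) * A k x‖
      ≤ D * ((‖z‖ * M * x) ^ N / N.factorial)) ∧
    (∀ x ∈ Set.Icc 0 b, ‖h x - ∑ k ∈ Finset.range N, z ^ k / (k.factorial : ℂ) * B k x‖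
      ≤ D * ((‖z‖ * M * x) ^ N / N.factorial)) := by
  have hcont := spps_cont hb ha hc hA0 hB0 hA hB
  induction N with
  | zero => 
    constructor
    · intro x hx; simpa using hgD x hx
    · intro x hx; simpa using hhD x hx
  | succ N ih =>
    exact ⟨fun x hx => spps_rem_step hM hD ha haM hA0 hA (fun k => (hcont k).2) hhc hg ih.2 x hx,
      fun x hx => spps_rem_step hM hD hc hcM hB0 hB (fun k => (hcont k).1) hgc hh ih.1 x hx⟩

lemma spps_hasSum {z : ℂ} {g h : ℝ → ℂ} (hb : 0 ≤ b) (hM : 0 ≤ M)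
    (ha : ContinuousOn a (Set.Icc 0 b)) (hc : ContinuousOn c (Set.Icc 0 b))
    (haM : ∀ s ∈ Set.Icc 0 b, ‖a s‖ ≤ M)
    (hcM : ∀ s ∈ Set.Icc 0 b, ‖c s‖ ≤ M)
    (hA0 : ∀ x, A 0 x = 1) (hB0 : ∀ x, B 0 x = 1)
    (hA : ∀ k x, A (k + 1) x = (k + 1 : ℂ) * ∫ s in (0:ℝ)..x, B k s * a s)
    (hB : ∀ k x, B (k + 1) x = (k + 1 : ℂ) * ∫ s in (0:ℝ)..x, A k s * c s)
    (hg : ∀ x ∈ Set.Icc 0 b, g x = 1 + ∫ s in (0:ℝ)..x, z * (h s * a s))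
    (hh : ∀ x ∈ Set.Icc 0 b, h x = 1 + ∫ s in (0:ℝ)..x, z * (g s * c s))
    (hgc : ContinuousOn g (Set.Icc 0 b)) (hhc : ContinuousOn h (Set.Icc 0 b))
    (x : ℝ) (hx : x ∈ Set.Icc 0 b) :
    HasSum (fun k : ℕ => z ^ k / (k.factorial : ℂ) * A k x) (g x) := by
  obtain ⟨D1, hD1⟩ := isCompact_Icc.exists_bound_of_continuousOn hgc
  obtain ⟨D2, hD2⟩ := isCompact_Icc.exists_bound_of_continuousOn hhc
  have hD : 0 ≤ max D1 D2 := le_max_of_le_left ((norm_nonneg _).trans (hD1 x hx))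
  have hrem := fun N => (spps_rem hb hM hD ha hc haM hcM hA0 hB0 hA hB hg hh hgc hhc
    (fun s hs => (hD1 s hs).trans (le_max_left _ _))
    (fun s hs => (hD2 s hs).trans (le_max_right _ _)) N).1 x hx
  have hbd := spps_bound hM haM hcM hA0 hB0 hA hB
  have hsum : Summable (fun k : ℕ => z ^ k / (k.factorial : ℂ) * A k x) := by
    refine Summable.of_norm_bounded (Real.summable_pow_div_factorial (‖z‖ * M * x)) fun k => ?_
    rw [norm_mul, norm_div, norm_pow, Complex.norm_natCast]
    calc _ ≤ ‖z‖ ^ k / k.factorial * (M * x) ^ k := by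
          gcongr
          exact (hbd k x hx).1
      _ = _ := by rw [mul_assoc, mul_pow ‖z‖]; ring
  have ht := hsum.hasSum.tendsto_sum_nat
  have ht2 : Tendsto (fun N => ∑ k ∈ Finset.range N, z ^ k / (k.factorial : ℂ) * A k x) atTop
      (𝓝 (g x)) := by
    rw [tendsto_iff_norm_sub_tendsto_zero]
    have h0 : Tendsto (fun N : ℕ => max D1 D2 * ((‖z‖ * M * x) ^ N / N.factorial)) atTop (𝓝 0) := by
      simpa using (FloorSemiring.tendsto_pow_div_factorial_atTop (‖z‖ * M * x)).const_mul (max D1 D2)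
    refine squeeze_zero (fun _ => norm_nonneg _) (fun N => ?_) h0
    rw [norm_sub_rev]
    exact hrem N
  rw [← tendsto_nhds_unique ht ht2]
  exact hsum.hasSum

end spps

/-- Moments of Legendre polynomials. -/
def legMom (k n : ℕ) : ℝ := polyInt (Polynomial.X ^ k * legendreP n)

lemma legMom_zero {k n : ℕ} (h : k < n) : legMom k n = 0 := by
  apply legendre_orth
  rw [Polynomial.degree_X_pow]
  exact_mod_cast h

lemma legMom_le (k n : ℕ) : |legMom k n| ≤ 2 * 8 ^ n := by
  unfold legMom polyInt
  have h := intervalIntegral.norm_integral_le_of_norm_le_const (a := (-1:ℝ)) (b := 1)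
    (C := 8 ^ n) (f := fun t => (Polynomial.X ^ k * legendreP n).eval t) (by
      intro t ht
      rw [Set.uIoc_of_le (by norm_num)] at ht
      have ht' : |t| ≤ 1 := abs_le.mpr ⟨ht.1.le, ht.2⟩
      rw [Polynomial.eval_mul, Polynomial.eval_pow, Polynomial.eval_X, Real.norm_eq_abs, abs_mul,
        abs_pow]
      calc _ ≤ 1 * (8:ℝ) ^ n :=
            mul_le_mul (pow_le_one₀ (abs_nonneg t) ht') (legendre_eval_le n t ht')
              (abs_nonneg _) zero_le_one
        _ = _ := one_mul _)
  rw [Real.norm_eq_abs] at h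
  refine h.trans (le_of_eq ?_)
  norm_num
  ring

/-- The value of the functional `t^j ↦ α j` on `P_n`. -/
def legFun (α : ℕ → ℂ) (n : ℕ) : ℂ :=
  ∑ j ∈ Finset.range (n + 1), ((legendreP n).coeff j : ℂ) * α j

lemma legFun_expand (α : ℕ → ℂ) (k : ℕ) :
    α k = ∑ n ∈ Finset.range (k + 1), ((2 * n + 1 : ℂ) / 2) * (legMom k n : ℂ) * legFun α n := by
  have hX := legendre_expand (k + 1) (Polynomial.X ^ k) (by
    rw [Polynomial.degree_X_pow]; exact_mod_cast Nat.lt_succ_self k)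
  have h1 : α k = ∑ j ∈ Finset.range (k + 1),
      (((Polynomial.X ^ k : Polynomial ℝ).coeff j : ℝ) : ℂ) * α j := by
    rw [Finset.sum_eq_single k]
    · simp
    · intro j _ hj; simp [Polynomial.coeff_X_pow, hj]
    · intro h; simp at h
  have h2 : ∀ j, (Polynomial.X ^ k : Polynomial ℝ).coeff j = ∑ n ∈ Finset.range (k + 1),
      (((2 * n + 1 : ℝ) / 2) * legMom k n) * (legendreP n).coeff j := by
    intro j
    conv_lhs => rw [hX]
    rw [Polynomial.finsetSum_coeff]
    simp [legMom]
  rw [h1]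
  simp_rw [h2]
  push_cast
  simp_rw [Finset.sum_mul]
  rw [Finset.sum_comm]
  refine Finset.sum_congr rfl fun n hn => ?_
  have hn' := Finset.mem_range.mp hn
  unfold legFun
  rw [Finset.mul_sum]
  symm
  rw [Finset.sum_subset (Finset.range_mono (show n + 1 ≤ k + 1 by omega))]
  · refine Finset.sum_congr rfl fun j _ => ?_
    ring
  · intro j _ hj
    rw [Polynomial.coeff_eq_zero_of_natDegree_lt (p := legendreP n)]
    · simp
    · have := legendre_natDegree_le n
      simp at hj
      omega

lemma legFun_one (n : ℕ) : legFun (fun _ => 1) n = 1 := by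
  have h := legendre_eval n 1 (by norm_num)
  rw [Polynomial.eval_eq_sum_range' (Nat.lt_succ_of_le (legendre_natDegree_le n))] at h
  unfold legFun
  simp only [one_pow, mul_one] at h ⊢
  exact_mod_cast h

lemma legFun_expand_sub (α : ℕ → ℂ) (k : ℕ) :
    α k - 1 = ∑ n ∈ Finset.range (k + 1),
      (((2 * n + 1 : ℂ) / 2) * (legFun α n - 1)) * (legMom k n : ℂ) := by
  have h1 := legFun_expand α k
  have h2 := legFun_expand (fun _ => 1) k
  simp only [legFun_one] at h2
  refine (congrArg₂ (· - ·) h1 h2).trans ?_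
  rw [← Finset.sum_sub_distrib]
  exact Finset.sum_congr rfl fun n _ => by ring

lemma legFun_beta_le {α : ℕ → ℂ} {C M : ℝ} (hC : 0 ≤ C) (hM : 1 ≤ M)
    (hα : ∀ k, ‖α k‖ ≤ C * M ^ k) (n : ℕ) :
    ‖((2 * n + 1 : ℂ) / 2) * (legFun α n - 1)‖ ≤ (C + 1) * (16 * M) ^ n := by
  have hM0 : 0 ≤ M := zero_le_one.trans hM
  have h1 : ‖legFun α n‖ ≤ (n + 1) * (4 ^ n * (C * M ^ n)) := by
    unfold legFun
    refine (norm_sum_le _ _).trans ?_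
    calc _ ≤ ∑ j ∈ Finset.range (n + 1), (4:ℝ) ^ n * (C * M ^ n) := by
          refine Finset.sum_le_sum fun j hj => ?_
          have hj' : j ≤ n := by have := Finset.mem_range.mp hj; omega
          rw [norm_mul, Complex.norm_real, Real.norm_eq_abs]
          refine mul_le_mul (legendre_coeff_le n j hj') ((hα j).trans ?_) (norm_nonneg _)
            (by positivity)
          gcongr
      _ = _ := by simp
  have h2 : ‖((2 * n + 1 : ℂ) / 2)‖ ≤ n + 1 := by
    have : ((2 * n + 1 : ℂ) / 2) = (((2 * n + 1 : ℝ) / 2 : ℝ) : ℂ) := by push_cast; rfl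
    rw [this, Complex.norm_real, Real.norm_eq_abs, abs_of_nonneg (by positivity)]
    linarith
  have h3 : (n + 1 : ℝ) ≤ 2 ^ n := by exact_mod_cast Nat.lt_two_pow_self
  have h4 : ‖legFun α n - 1‖ ≤ 2 ^ n * (4 ^ n * ((C + 1) * M ^ n)) := by
    refine (norm_sub_le _ _).trans ?_
    have h5 : (1:ℝ) ≤ 2 ^ n * (4 ^ n * M ^ n) := by
      rw [← mul_pow, ← mul_pow]
      exact one_le_pow₀ (by linarith)
    have h6 : (n + 1) * (4 ^ n * (C * M ^ n)) ≤ 2 ^ n * (4 ^ n * (C * M ^ n)) := by gcongr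
    rw [norm_one]
    nlinarith
  rw [norm_mul]
  calc _ ≤ (2:ℝ) ^ n * (2 ^ n * (4 ^ n * ((C + 1) * M ^ n))) := by
        exact mul_le_mul (h2.trans h3) h4 (norm_nonneg _) (by positivity)
    _ = (C + 1) * (16 * M) ^ n := by
        rw [show (16 * M : ℝ) = 2 * (2 * (4 * M)) by ring]
        simp only [mul_pow]; ring

lemma bessel_hasSum (z : ℂ) (n : ℕ) :
    HasSum (fun k : ℕ => z ^ k / (k.factorial : ℂ) * (legMom k n : ℂ))
      (∫ s in (-1:ℝ)..1, (((legendreP n).eval s : ℝ) : ℂ) * Complex.exp (z * s)) := by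
  have e : ∀ k : ℕ, z ^ k / (k.factorial : ℂ) * (legMom k n : ℂ) =
      ∫ s in (-1:ℝ)..1, (((legendreP n).eval s : ℝ) : ℂ) * ((z * s) ^ k / (k.factorial : ℂ)) := by
    intro k
    unfold legMom polyInt
    rw [← intervalIntegral.integral_ofReal, ← intervalIntegral.integral_const_mul]
    refine intervalIntegral.integral_congr fun s _ => ?_
    simp only [Polynomial.eval_mul, Polynomial.eval_pow, Polynomial.eval_X]
    push_cast
    rw [mul_pow]; ring
  simp_rw [e]
  have hP : Continuous fun s : ℝ => (((legendreP n).eval s : ℝ) : ℂ) :=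
    Complex.continuous_ofReal.comp (legendreP n).continuous
  refine intervalIntegral.hasSum_integral_of_dominated_convergence
    (fun k _ => 8 ^ n * (‖z‖ ^ k / k.factorial)) ?_ ?_ ?_ ?_ ?_
  · intro k
    exact (hP.mul (by fun_prop)).aestronglyMeasurable
  · intro k
    refine Filter.Eventually.of_forall fun t ht => ?_
    rw [Set.uIoc_of_le (by norm_num)] at ht
    have ht' : |t| ≤ 1 := abs_le.mpr ⟨ht.1.le, ht.2⟩
    rw [norm_mul, norm_div, norm_pow, norm_mul, Complex.norm_real, Complex.norm_real,
      Complex.norm_natCast, Real.norm_eq_abs, Real.norm_eq_abs]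
    have := legendre_eval_le n t ht'
    gcongr
    exact mul_le_of_le_one_right (norm_nonneg _) ht'
  · exact Filter.Eventually.of_forall fun t _ =>
      (Real.summable_pow_div_factorial ‖z‖).mul_left _
  · exact intervalIntegrable_const
  · refine Filter.Eventually.of_forall fun t _ => ?_
    refine HasSum.mul_left _ ?_
    rw [Complex.exp_eq_exp_ℂ]
    exact NormedSpace.expSeries_div_hasSum_exp (z * t)

lemma neumann_main {α : ℕ → ℂ} {C M r : ℝ} (hC : 0 ≤ C) (hM : 1 ≤ M)
    (hα : ∀ k, ‖α k‖ ≤ C * M ^ k) (z : ℂ) (hz : ‖z‖ ≤ r) (S : ℂ)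
    (hS : HasSum (fun k : ℕ => z ^ k / (k.factorial : ℂ) * α k) S) :
    (∀ n : ℕ, ‖(((2 * n + 1 : ℂ) / 2) * (legFun α n - 1)) *
      ∫ s in (-1:ℝ)..1, (((legendreP n).eval s : ℝ) : ℂ) * Complex.exp (z * s)‖ ≤
        (2 * (C + 1) * Real.exp (256 * M * r)) * (1 / 2) ^ n) ∧
    HasSum (fun n : ℕ => (((2 * n + 1 : ℂ) / 2) * (legFun α n - 1)) *
      ∫ s in (-1:ℝ)..1, (((legendreP n).eval s : ℝ) : ℂ) * Complex.exp (z * s))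
      (S - Complex.exp z) := by
  have hM0 : 0 ≤ M := zero_le_one.trans hM
  have hr : 0 ≤ r := (norm_nonneg z).trans hz
  set β : ℕ → ℂ := fun n => ((2 * n + 1 : ℂ) / 2) * (legFun α n - 1) with hβ
  have hβle : ∀ n, ‖β n‖ ≤ (C + 1) * (16 * M) ^ n := fun n => legFun_beta_le hC hM hα n
  set F : ℕ × ℕ → ℂ := fun p =>
    z ^ p.2 / (p.2.factorial : ℂ) * (β p.1 * (legMom p.2 p.1 : ℂ)) with hF
  set G : ℕ × ℕ → ℝ := fun p => (2 * (C + 1) * (1 / 2) ^ p.1) *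
    ((256 * M * r) ^ p.2 / p.2.factorial) with hG
  have hFG : ∀ p, ‖F p‖ ≤ G p := by
    rintro ⟨n, k⟩
    simp only [hF, hG]
    by_cases hkn : k < n
    · rw [legMom_zero hkn]
      simp only [Complex.ofReal_zero, mul_zero, norm_zero]
      positivity
    · have hnk : n ≤ k := not_lt.mp hkn
      rw [norm_mul, norm_mul, norm_div, norm_pow, Complex.norm_natCast, Complex.norm_real,
        Real.norm_eq_abs]
      calc _ ≤ r ^ k / k.factorial * (((C + 1) * (16 * M) ^ n) * (2 * 8 ^ n)) := by
            refine mul_le_mul (by gcongr) (mul_le_mul (hβle n) (legMom_le k n) (abs_nonneg _)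
              (by positivity)) (by positivity) (by positivity)
        _ = r ^ k / k.factorial * (2 * (C + 1) * (1 / 2) ^ n) * (256 * M) ^ n := by
            rw [show (256 * M : ℝ) = 2 * ((16 * M) * 8) by ring, mul_pow 2, mul_pow (16 * M),
              div_pow, one_pow]
            field_simp
        _ ≤ r ^ k / k.factorial * (2 * (C + 1) * (1 / 2) ^ n) * (256 * M) ^ k := by
            gcongr
            linarith
        _ = _ := by rw [mul_pow (256 * M) r]; ring
  have hGs1 : Summable fun n : ℕ => 2 * (C + 1) * ((1:ℝ) / 2) ^ n :=
    summable_geometric_two.mul_left _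
  have hGs2 := Real.summable_pow_div_factorial (256 * M * r)
  have hGs : Summable G := by
    refine hGs1.mul_of_nonneg hGs2 ?_ ?_
    · intro n; positivity
    · intro n; positivity
  have hFs : Summable F := Summable.of_norm_bounded hGs hFG
  have hrow : ∀ n, HasSum (fun k => F (n, k)) (β n *
      ∫ s in (-1:ℝ)..1, (((legendreP n).eval s : ℝ) : ℂ) * Complex.exp (z * s)) := by
    intro n
    have := (bessel_hasSum z n).mul_left (β n)
    refine this.congr_fun ?_
    intro k
    simp only [hF]; ring
  have hexp : HasSum (fun k : ℕ => z ^ k / (k.factorial : ℂ)) (Complex.exp z) := by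
    rw [Complex.exp_eq_exp_ℂ]
    exact NormedSpace.expSeries_div_hasSum_exp z
  have hcol : ∀ k, HasSum (fun n => F (n, k)) (z ^ k / (k.factorial : ℂ) * α k -
      z ^ k / (k.factorial : ℂ)) := by
    intro k
    have e : z ^ k / (k.factorial : ℂ) * α k - z ^ k / (k.factorial : ℂ) =
        ∑ n ∈ Finset.range (k + 1), F (n, k) := by
      rw [← mul_sub_one, legFun_expand_sub, Finset.mul_sum]
    rw [e]
    apply hasSum_sum_of_ne_finset_zero
    intro n hn
    have : k < n := by simp at hn; omega
    simp [hF, legMom_zero this]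
  constructor
  · intro n
    rw [← (hrow n).tsum_eq]
    have hg := (hGs2.hasSum.mul_left (2 * (C + 1) * ((1:ℝ) / 2) ^ n))
    refine (tsum_of_norm_bounded hg fun k => hFG (n, k)).trans (le_of_eq ?_)
    have : ∑' k : ℕ, (256 * M * r) ^ k / (k.factorial : ℝ) = Real.exp (256 * M * r) := by
      rw [Real.exp_eq_exp_ℝ]
      exact (NormedSpace.expSeries_div_hasSum_exp (256 * M * r)).tsum_eq
    rw [this]; ring
  · have h1 : HasSum (fun n => β n *
      ∫ s in (-1:ℝ)..1, (((legendreP n).eval s : ℝ) : ℂ) * Complex.exp (z * s)) (∑' p, F p) :=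
      hFs.hasSum.prod_fiberwise hrow
    have h2 : HasSum (fun k : ℕ => z ^ k / (k.factorial : ℂ) * α k -
      z ^ k / (k.factorial : ℂ)) (∑' p, F p) := by
      have h3 : HasSum (F ∘ Prod.swap) (∑' p, F p) :=
        (Equiv.prodComm ℕ ℕ).hasSum_iff.mpr hFs.hasSum
      exact h3.prod_fiberwise hcol
    rw [← h2.unique (hS.sub hexp)]
    exact h1

/-- The formal powers divided by `f`. -/
def fpA (f : ℝ → ℂ) (k : ℕ) : ℝ → ℂ := if Odd k then formalX f k else formalXt f k

/-- The complementary family of iterated integrals. -/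
def fpB (f : ℝ → ℂ) (k : ℕ) : ℝ → ℂ := if Odd k then formalXt f k else formalX f k

lemma fpA_succ (f : ℝ → ℂ) (k : ℕ) (x : ℝ) :
    fpA f (k + 1) x = (k + 1 : ℂ) * ∫ s in (0:ℝ)..x, fpB f k s * ((f s) ^ 2)⁻¹ := by
  rcases Nat.even_or_odd k with h | h
  · have h1 : ¬ Odd k := Nat.not_odd_iff_even.mpr h
    have h2 : Odd (k + 1) := h.add_one
    simp only [fpA, fpB, h1, h2, if_true, if_false, formalX, h2.neg_one_pow, zpow_neg_one]
  · have h2 : ¬ Odd (k + 1) := Nat.not_odd_iff_even.mpr h.add_one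
    simp only [fpA, fpB, h, h2, if_true, if_false, formalXt, h.neg_one_pow, zpow_neg_one]

lemma fpB_succ (f : ℝ → ℂ) (k : ℕ) (x : ℝ) :
    fpB f (k + 1) x = (k + 1 : ℂ) * ∫ s in (0:ℝ)..x, fpA f k s * (f s) ^ 2 := by
  rcases Nat.even_or_odd k with h | h
  · have h1 : ¬ Odd k := Nat.not_odd_iff_even.mpr h
    have h2 : Odd (k + 1) := h.add_one
    simp only [fpA, fpB, h1, h2, if_true, if_false, formalXt, h.neg_one_pow, zpow_one]
  · have h2 : ¬ Odd (k + 1) := Nat.not_odd_iff_even.mpr h.add_one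
    simp only [fpA, fpB, h, h2, if_true, if_false, formalX, h.add_one.neg_one_pow, zpow_one]

/-- representation of the solution as a Neumann series of Bessel functions. -/
theorem solution_NSBF_representation
    (b : ℝ) (hb : 0 < b) (q : ℝ → ℂ) (hq : ContinuousOn q (Set.Icc (-b) b))
    (f f' : ℝ → ℂ)
    (hf : ∀ x ∈ Set.Icc (-b) b, HasDerivAt f (f' x) x)
    (hf' : ∀ x ∈ Set.Icc (-b) b, HasDerivAt f' (q x * f x) x)
    (hf0 : f 0 = 1) (hf'0 : f' 0 = 0)
    (hfne : ∀ x ∈ Set.Icc (-b) b, f x ≠ 0)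
    (w : ℂ) (y y' : ℝ → ℂ)
    (hy : ∀ x ∈ Set.Icc (-b) b, HasDerivAt y (y' x) x)
    (hy' : ∀ x ∈ Set.Icc (-b) b, HasDerivAt y' (q x * y x - w ^ 2 * y x) x)
    (hy0 : y 0 = 1) (hy'0 : y' 0 = Complex.I * w) :
    (∀ x ∈ Set.Ioc (0:ℝ) b,
      Tendsto (fun N : ℕ => Complex.exp (Complex.I * w * x) +
          ∑ n ∈ Finset.range N, betaCoef f n x *
            ∫ s in (-1:ℝ)..1, (((legendreP n).eval s : ℝ) : ℂ) * Complex.exp (Complex.I * w * x * s))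
        atTop (𝓝 (y x))) ∧
    ∀ Kc : Set ℝ, Kc ⊆ Set.Ioc (0:ℝ) b → IsCompact Kc →
      TendstoUniformlyOn
        (fun N : ℕ => fun x : ℝ => Complex.exp (Complex.I * w * x) +
          ∑ n ∈ Finset.range N, betaCoef f n x *
            ∫ s in (-1:ℝ)..1, (((legendreP n).eval s : ℝ) : ℂ) * Complex.exp (Complex.I * w * x * s))
        y atTop Kc := by
  -- restrict everything to `[0,b]`
  have hsub : Set.Icc 0 b ⊆ Set.Icc (-b) b := Set.Icc_subset_Icc (by linarith) le_rfl
  have h0 : (0:ℝ) ∈ Set.Icc (-b) b := ⟨by linarith, hb.le⟩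
  have hfc : ContinuousOn f (Set.Icc 0 b) := fun x hx =>
    (hf x (hsub hx)).continuousAt.continuousWithinAt
  have hf'c : ContinuousOn f' (Set.Icc 0 b) := fun x hx =>
    (hf' x (hsub hx)).continuousAt.continuousWithinAt
  have hyc : ContinuousOn y (Set.Icc 0 b) := fun x hx =>
    (hy x (hsub hx)).continuousAt.continuousWithinAt
  have hy'c : ContinuousOn y' (Set.Icc 0 b) := fun x hx =>
    (hy' x (hsub hx)).continuousAt.continuousWithinAt
  have hne : ∀ x ∈ Set.Icc 0 b, f x ≠ 0 := fun x hx => hfne x (hsub hx)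
  have hcc : ContinuousOn (fun s => (f s) ^ 2) (Set.Icc 0 b) := hfc.pow 2
  have hac : ContinuousOn (fun s => ((f s) ^ 2)⁻¹) (Set.Icc 0 b) :=
    hcc.inv₀ fun x hx => pow_ne_zero 2 (hne x hx)
  obtain ⟨M1, hM1⟩ := isCompact_Icc.exists_bound_of_continuousOn hac
  obtain ⟨M2, hM2⟩ := isCompact_Icc.exists_bound_of_continuousOn hcc
  obtain ⟨C, hC⟩ := isCompact_Icc.exists_bound_of_continuousOn hfc
  have hC0 : 0 ≤ C := (norm_nonneg _).trans (hC 0 ⟨le_rfl, hb.le⟩)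
  set M := max 1 (max M1 M2) with hMdef
  have hM : 1 ≤ M := le_max_left _ _
  have hM0 : 0 ≤ M := zero_le_one.trans hM
  have haM : ∀ s ∈ Set.Icc 0 b, ‖((f s) ^ 2)⁻¹‖ ≤ M := fun s hs =>
    (hM1 s hs).trans ((le_max_left _ _).trans (le_max_right _ _))
  have hcM : ∀ s ∈ Set.Icc 0 b, ‖(f s) ^ 2‖ ≤ M := fun s hs =>
    (hM2 s hs).trans ((le_max_right _ _).trans (le_max_right _ _))
  have hA0 : ∀ x, fpA f 0 x = 1 := fun x => by simp [fpA, formalXt]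
  have hB0 : ∀ x, fpB f 0 x = 1 := fun x => by simp [fpB, formalX]
  have hbd := spps_bound (b := b) hM0 haM hcM hA0 hB0 (fpA_succ f) (fpB_succ f)
  -- the first order system
  set z0 : ℂ := Complex.I * w with hz0
  have hz2 : z0 ^ 2 = - w ^ 2 := by rw [hz0, mul_pow, Complex.I_sq]; ring
  set g : ℝ → ℂ := fun x => y x / f x with hg
  set h : ℝ → ℂ := fun x => 1 + ∫ s in (0:ℝ)..x, z0 * (g s * (f s) ^ 2) with hh
  have hgc : ContinuousOn g (Set.Icc 0 b) := hyc.div hfc hne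
  have hhc : ContinuousOn h (Set.Icc 0 b) :=
    continuousOn_const.add (prim_cont hb.le (continuousOn_const.mul (hgc.mul hcc)))
  have hD : ∀ x ∈ Set.Icc 0 b, f x * y' x - f' x * y x = z0 * h x := by
    intro x hx
    have hder : ∀ t ∈ Set.uIcc 0 x, HasDerivAt (fun t => f t * y' t - f' t * y t)
        (z0 * (z0 * (g t * (f t) ^ 2))) t := by
      intro t ht
      rw [Set.uIcc_of_le hx.1] at ht
      have ht0 : t ∈ Set.Icc 0 b := ⟨ht.1, ht.2.trans hx.2⟩
      have ht' := hsub ht0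
      refine (((hf t ht').mul (hy' t ht')).sub ((hf' t ht').mul (hy t ht'))).congr_deriv ?_
      have e : g t * (f t) ^ 2 = y t * f t := by
        simp only [hg]
        have := hne t ht0
        field_simp
      rw [e, ← mul_assoc, ← pow_two, hz2]
      ring
    have hi := intervalIntegral.integral_eq_sub_of_hasDerivAt hder
      (ii_of_cont hx (continuousOn_const.mul (continuousOn_const.mul (hgc.mul hcc))))
    rw [intervalIntegral.integral_const_mul, hf0, hf'0, hy'0, hy0] at hi
    simp only [hh]
    linear_combination -hi
  have hgint : ∀ x ∈ Set.Icc 0 b, g x = 1 + ∫ s in (0:ℝ)..x, z0 * (h s * ((f s) ^ 2)⁻¹) := by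
    intro x hx
    have hder : ∀ t ∈ Set.uIcc 0 x, HasDerivAt g (z0 * (h t * ((f t) ^ 2)⁻¹)) t := by
      intro t ht
      rw [Set.uIcc_of_le hx.1] at ht
      have ht0 : t ∈ Set.Icc 0 b := ⟨ht.1, ht.2.trans hx.2⟩
      have ht' := hsub ht0
      refine ((hy t ht').div (hf t ht') (hne t ht0)).congr_deriv ?_
      rw [← mul_assoc, ← hD t ht0, div_eq_mul_inv]
      ring
    have hi := intervalIntegral.integral_eq_sub_of_hasDerivAt hder
      (ii_of_cont hx (continuousOn_const.mul (hhc.mul hac)))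
    rw [hi]
    simp [hg, hf0, hy0]
  have hsum := spps_hasSum (A := fpA f) (B := fpB f) (z := z0) (g := g) (h := h) hb.le hM0 hac hcc
    haM hcM hA0 hB0 (fpA_succ f) (fpB_succ f) hgint (fun x _ => rfl) hgc hhc
  have hfp : ∀ k x, formalPower f k x = f x * fpA f k x := by
    intro k x
    unfold formalPower fpA
    split_ifs <;> rfl
  have hmain : ∀ x ∈ Set.Ioc (0:ℝ) b,
      (∀ n : ℕ, ‖betaCoef f n x * ∫ s in (-1:ℝ)..1, (((legendreP n).eval s : ℝ) : ℂ) *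
        Complex.exp (Complex.I * w * x * s)‖ ≤
          (2 * (C + 1) * Real.exp (256 * M * (‖z0‖ * b))) * (1 / 2) ^ n) ∧
      HasSum (fun n : ℕ => betaCoef f n x * ∫ s in (-1:ℝ)..1, (((legendreP n).eval s : ℝ) : ℂ) *
        Complex.exp (Complex.I * w * x * s)) (y x - Complex.exp (Complex.I * w * x)) := by
    intro x hx
    have hx0 : x ∈ Set.Icc 0 b := ⟨hx.1.le, hx.2⟩
    have hxC : (x : ℂ) ≠ 0 := by exact_mod_cast hx.1.ne'
    set α : ℕ → ℂ := fun k => formalPower f k x / (x : ℂ) ^ k with hα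
    have hβ : ∀ n, betaCoef f n x = ((2 * n + 1 : ℂ) / 2) * (legFun α n - 1) := by
      intro n
      unfold betaCoef legFun
      simp only [hα, mul_div_assoc]
    have hαle : ∀ k, ‖α k‖ ≤ C * M ^ k := by
      intro k
      simp only [hα]
      rw [hfp, norm_div, norm_mul, norm_pow, Complex.norm_real, Real.norm_eq_abs,
        abs_of_pos hx.1, div_le_iff₀ (pow_pos hx.1 k), mul_assoc, ← mul_pow]
      exact mul_le_mul (hC x hx0) (hbd k x hx0).1 (norm_nonneg _) hC0
    have hS : HasSum (fun k : ℕ => (z0 * x) ^ k / (k.factorial : ℂ) * α k) (y x) := by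
      have h1 := (hsum x hx0).mul_left (f x)
      have e1 : f x * g x = y x := by
        simp only [hg]
        exact mul_div_cancel₀ _ (hne x hx0)
      rw [e1] at h1
      refine h1.congr_fun fun k => ?_
      simp only [hα]
      rw [hfp, mul_pow]
      have := pow_ne_zero k hxC
      field_simp
    have hz : ‖z0 * x‖ ≤ ‖z0‖ * b := by
      rw [norm_mul, Complex.norm_real, Real.norm_eq_abs, abs_of_pos hx.1]
      gcongr
      exact hx.2
    have hfin := neumann_main hC0 hM hαle (z0 * x) hz (y x) hS
    simp only [← hβ] at hfin
    exact hfin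
  have hsumm : Summable fun n : ℕ =>
      (2 * (C + 1) * Real.exp (256 * M * (‖z0‖ * b))) * ((1:ℝ) / 2) ^ n :=
    summable_geometric_two.mul_left _
  have hunif : TendstoUniformlyOn
        (fun N : ℕ => fun x : ℝ => Complex.exp (Complex.I * w * x) +
          ∑ n ∈ Finset.range N, betaCoef f n x *
            ∫ s in (-1:ℝ)..1, (((legendreP n).eval s : ℝ) : ℂ) * Complex.exp (Complex.I * w * x * s))
        y atTop (Set.Ioc (0:ℝ) b) := by
    have h1 := tendstoUniformlyOn_tsum_nat (s := Set.Ioc (0:ℝ) b) hsumm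
      (fun n x hx => (hmain x hx).1 n)
    rw [Metric.tendstoUniformlyOn_iff] at h1 ⊢
    intro ε hε
    filter_upwards [h1 ε hε] with N hN x hx
    have h2 := hN x hx
    rw [(hmain x hx).2.tsum_eq, dist_eq_norm] at h2
    rw [dist_eq_norm]
    convert h2 using 2
    ring
  exact ⟨fun x hx => hunif.tendsto_at hx, fun Kc hK _ => hunif.mono hK⟩

end
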